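/- arXiv:1709.05536 — 3 statements merged into one kernel-verified Lean document; each statement's English description precedes it below -/
import Mathlib

section
/- If σ(x)/x ∈ ℤ[ζ_p], then the ideal I = ⟨x, σ(x), ..., σ^{n-1}(x)⟩_ℤ of O_K equals the principal ideal x·O_K. -/
namespace Stmt7Aux

variable {L : Type*} [Field L] [CharZero L]

lemma zeta_pow_congr {p : ℕ} {ζ : L} (hζ : IsPrimitiveRoot ζ p) {a b : ℕ}
    (h : (a : ZMod p) = (b : ZMod p)) : ζ ^ a = ζ ^ b := by
  rw [ZMod.natCast_eq_natCast_iff] at h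
  have key : ∀ c : ℕ, ζ ^ c = ζ ^ (c % p) := by
    intro c
    conv_lhs => rw [← Nat.mod_add_div c p, pow_add, pow_mul, hζ.pow_eq_one, one_pow, mul_one]
  rw [key a, key b, h]

lemma sigma_pow_zeta {ζ : L} {r : ℕ} (σ : L ≃ₐ[ℚ] L) (hσ : σ ζ = ζ ^ r) (i : ℕ) :
    (σ ^ i) ζ = ζ ^ r ^ i := by
  induction i with
  | zero => simp
  | succ i ih => rw [pow_succ', AlgEquiv.mul_apply, ih, map_pow, hσ, ← pow_mul, pow_succ']

lemma exists_pow {p : ℕ} [Fact p.Prime] {r : ℕ} (hr : orderOf (r : ZMod p) = p - 1)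
    (a : ZMod p) (ha : a ≠ 0) : ∃ i < p - 1, a = (r : ZMod p) ^ i := by
  have hp := (Fact.out : p.Prime)
  have h0 : (r : ZMod p) ≠ 0 := by
    intro h
    have : orderOf (r : ZMod p) ≠ 0 := by
      rw [hr]; have := hp.two_le; omega
    rw [h] at this
    exact this (by
      rw [orderOf_eq_zero_iff']
      intro n hn
      simp [hn.ne'])
  let u : (ZMod p)ˣ := Units.mk0 _ h0
  have hu : orderOf u = Nat.card (ZMod p)ˣ := by
    rw [← orderOf_units, Nat.card_eq_fintype_card, ZMod.card_units]
    exact hr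
  have hm : Units.mk0 a ha ∈ Submonoid.powers u := by
    rw [mem_powers_iff_mem_zpowers, (Subgroup.card_eq_iff_eq_top _).mp
      ((Nat.card_zpowers u).trans hu)]
    trivial
  rw [mem_powers_iff_mem_range_orderOf] at hm
  simp only [Finset.mem_image, Finset.mem_range] at hm
  obtain ⟨i, hi, h⟩ := hm
  refine ⟨i, ?_, ?_⟩
  · rw [← orderOf_units] at hi
    rw [← hr]; exact hi
  · have := congrArg Units.val h
    simpa [u] using this.symm

/-- the orbit of `ζ` spans `R[ζ]`. -/
lemma adjoin_le_span {p : ℕ} [Fact p.Prime] {ζ : L} (hζ : IsPrimitiveRoot ζ p) {r : ℕ}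
    (hr : orderOf (r : ZMod p) = p - 1) (R : Type*) [CommRing R] [Algebra R L] :
    Subalgebra.toSubmodule (Algebra.adjoin R {ζ}) ≤
      Submodule.span R (Set.range fun i : Fin (p - 1) => ζ ^ r ^ (i : ℕ)) := by
  have hp := (Fact.out : p.Prime)
  have key : ∀ k : ℕ, (k : ZMod p) ≠ 0 → 
      ζ ^ k ∈ Submodule.span R (Set.range fun i : Fin (p - 1) => ζ ^ r ^ (i : ℕ)) := by
    intro k hk
    obtain ⟨i, hi, h⟩ := exists_pow hr _ hk
    apply Submodule.subset_span
    exact ⟨⟨i, hi⟩, (zeta_pow_congr hζ (by push_cast; exact h)).symm⟩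
  have hone : (1 : L) ∈ Submodule.span R (Set.range fun i : Fin (p - 1) => ζ ^ r ^ (i : ℕ)) := by
    have hs := hζ.geom_sum_eq_zero hp.one_lt
    obtain ⟨q, hq⟩ : ∃ q, p = q + 1 := ⟨p - 1, by have := hp.two_le; omega⟩
    have hs' : (1 : L) = - ∑ i ∈ Finset.range q, ζ ^ (i + 1) := by
      have : ∑ i ∈ Finset.range (q + 1), ζ ^ i = 0 := by rw [← hq]; exact hs
      rw [Finset.sum_range_succ'] at this
      rw [pow_zero] at this
      linear_combination this
    rw [hs']
    apply Submodule.neg_mem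
    apply Submodule.sum_mem
    intro i hi
    apply key
    rw [Ne, ZMod.natCast_eq_zero_iff]
    intro hd
    have := Nat.le_of_dvd (by omega) hd
    rw [Finset.mem_range] at hi
    omega
  rw [Algebra.adjoin_eq_span, Submodule.span_le]
  intro y hy
  rw [SetLike.mem_coe, Submonoid.mem_closure_singleton] at hy
  obtain ⟨k, rfl⟩ := hy
  by_cases hk : (k : ZMod p) = 0
  · have : ζ ^ k = ζ ^ 0 := zeta_pow_congr hζ (by simpa using hk)
    rw [this, pow_zero]; exact hone
  · exact key k hk

lemma orbit_li {p : ℕ} [Fact p.Prime] [IsCyclotomicExtension {p} ℚ L] 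
    {ζ : L} (hζ : IsPrimitiveRoot ζ p) {r : ℕ}
    (hr : orderOf (r : ZMod p) = p - 1) :
    LinearIndependent ℚ (fun i : Fin (p - 1) => ζ ^ r ^ (i : ℕ)) := by
  have hp := (Fact.out : p.Prime)
  have : NeZero p := ⟨hp.ne_zero⟩
  apply linearIndependent_of_top_le_span_of_card_eq_finrank
  · refine le_trans ?_ (adjoin_le_span hζ hr ℚ)
    rw [IsCyclotomicExtension.adjoin_primitive_root_eq_top hζ]
    simp
  · rw [IsCyclotomicExtension.finrank (n := p) L
      (Polynomial.cyclotomic.irreducible_rat hp.pos), Nat.totient_prime hp]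
    simp

lemma sum_block {M : Type*} [AddCommMonoid M] (f : ℕ → M) (n k : ℕ) :
    ∑ i ∈ Finset.range (n * k), f i =
      ∑ i ∈ Finset.range n, ∑ j ∈ Finset.range k, f (i + n * j) := by
  induction k with
  | zero => simp
  | succ k ih =>
    rw [Nat.mul_succ, Finset.sum_range_add, ih]
    simp_rw [Finset.sum_range_succ]
    rw [Finset.sum_add_distrib]
    simp_rw [add_comm]

/-- Anti-invariant integers are combinations of conjugates of `θ`. -/
lemma anti {p : ℕ} [Fact p.Prime] [IsCyclotomicExtension {p} ℚ L] 
    {ζ : L} (hζ : IsPrimitiveRoot ζ p) {r : ℕ}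
    (hr : orderOf (r : ZMod p) = p - 1) (σ : L ≃ₐ[ℚ] L) (hσ : σ ζ = ζ ^ r)
    (n k : ℕ) (hnk : n * k = p - 1) (t : L) (ht : IsIntegral ℤ t) (hnt : (σ ^ n) t = -t) :
    ∃ c : ℕ → ℤ, t = ∑ i ∈ Finset.range n, (c i : L) *
      (σ ^ i) (∑ j ∈ Finset.range k, (-1) ^ j * (σ ^ (n * j)) ζ) := by
  have hp := (Fact.out : p.Prime)
  have hp1 : 0 < p - 1 := by have := hp.two_le; omega
  have : NeZero (p - 1) := ⟨hp1.ne'⟩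
  have hcl := IsCyclotomicExtension.Rat.isIntegralClosure_adjoin_singleton_of_prime hζ
  have hmem : t ∈ Algebra.adjoin ℤ {ζ} := by
    obtain ⟨y, hy⟩ := hcl.isIntegral_iff.mp ht
    rw [← hy]; exact y.2
  have hsp := adjoin_le_span hζ hr ℤ hmem
  rw [Submodule.mem_span_range_iff_exists_fun] at hsp
  obtain ⟨d, hd⟩ := hsp
  -- periodic extension
  let c : ℕ → ℤ := fun i => d (Fin.ofNat (p - 1) i)
  have hcp : ∀ i, c (i + (p - 1)) = c i := by
    intro i
    simp only [c]
    congr 1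
    ext; simp
  have hbp : ∀ i, (σ ^ (i + (p - 1))) ζ = (σ ^ i) ζ := by
    intro i
    rw [sigma_pow_zeta σ hσ, sigma_pow_zeta σ hσ]
    apply zeta_pow_congr hζ
    push_cast
    rw [pow_add, ← hr, pow_orderOf_eq_one, mul_one]
  have htc : t = ∑ i ∈ Finset.range (p - 1), (c i : L) * (σ ^ i) ζ := by
    rw [← hd, Finset.sum_range]
    refine Finset.sum_congr rfl fun i _ => ?_
    have : c i = d i := by simp [c]
    rw [this, sigma_pow_zeta σ hσ, zsmul_eq_mul]
  -- shifted sums of periodic functions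
  have shift : ∀ (f : ℕ → L), (∀ i, f (i + (p - 1)) = f i) → ∀ m,
      ∑ i ∈ Finset.range (p - 1), f (i + m) = ∑ i ∈ Finset.range (p - 1), f i := by
    intro f hf m
    induction m with
    | zero => simp
    | succ m ih =>
      rw [← ih]
      have h1 := Finset.sum_range_succ (fun i => f (i + m)) (p - 1)
      have h2 := Finset.sum_range_succ' (fun i => f (i + m)) (p - 1)
      rw [h1] at h2
      simp only [zero_add] at h2
      rw [add_comm (p - 1) m, hf] at h2
      have := add_right_cancel h2
      rw [this]
      refine Finset.sum_congr rfl fun i _ => ?_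
      congr 1; ring
  have hn_le : n ≤ p - 1 := by
    rw [← hnk]; apply Nat.le_mul_of_pos_right; 
    rcases Nat.eq_zero_or_pos k with h | h
    · rw [h] at hnk; omega
    · exact h
  -- c (i + n) = - c i
  have hanti : ∀ i, c (i + n) = - c i := by
    have hsum : ∑ i ∈ Finset.range (p - 1), ((c (i + n) + c i : ℤ) : L) * (σ ^ (i + n)) ζ = 0 := by
      push_cast
      simp_rw [add_mul]
      rw [Finset.sum_add_distrib]
      rw [shift (fun i => (c i : L) * (σ ^ i) ζ) (fun i => by simp only [hcp, hbp]) n, ← htc]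
      have : (σ ^ n) t = ∑ i ∈ Finset.range (p - 1), (c i : L) * (σ ^ (i + n)) ζ := by
        rw [htc, map_sum]
        refine Finset.sum_congr rfl fun i _ => ?_
        rw [map_mul, map_intCast, add_comm, pow_add, AlgEquiv.mul_apply]
      rw [← this, hnt]; ring
    have hsum2 : ∑ i ∈ Finset.range (p - 1),
        ((c (i + n) + c i : ℤ) : L) * (σ ^ i) ζ = 0 := by
      have h := congrArg (σ ^ n).symm hsum
      rw [map_sum, map_zero] at h
      rw [← h]
      refine Finset.sum_congr rfl fun i _ => ?_
      rw [map_mul, map_intCast, add_comm i n, pow_add σ n i, AlgEquiv.mul_apply, AlgEquiv.symm_apply_apply]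
    have hli := orbit_li hζ hr
    rw [Fintype.linearIndependent_iff] at hli
    have hz := hli (fun i => ((c (i + n) + c i : ℤ) : ℚ)) (by
      rw [Finset.sum_range] at hsum2
      rw [← hsum2]
      refine Finset.sum_congr rfl fun i _ => ?_
      rw [sigma_pow_zeta σ hσ, Algebra.smul_def]
      simp)
    intro i
    have h := hz (Fin.ofNat (p - 1) i)
    have h' : c ((Fin.ofNat (p - 1) i : ℕ) + n) + c (Fin.ofNat (p - 1) i : ℕ) = 0 := by
      exact_mod_cast h
    have e1 : c (Fin.ofNat (p - 1) i : ℕ) = c i := by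
      simp only [c]; congr 1; ext; simp
    have e2 : c ((Fin.ofNat (p - 1) i : ℕ) + n) = c (i + n) := by
      simp only [c]; congr 1; ext; simp
    rw [e1, e2] at h'
    omega
  have hanti' : ∀ i j, c (i + n * j) = (-1) ^ j * c i := by
    intro i j
    induction j with
    | zero => simp
    | succ j ih => rw [Nat.mul_succ, ← add_assoc, hanti, ih, pow_succ]; ring
  refine ⟨c, ?_⟩
  rw [htc, ← hnk, sum_block]
  refine Finset.sum_congr rfl fun i _ => ?_
  rw [map_sum, Finset.mul_sum]
  refine Finset.sum_congr rfl fun j _ => ?_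
  rw [hanti', map_mul, map_pow, map_neg, map_one, pow_add, AlgEquiv.mul_apply]
  push_cast
  ring

lemma sigma_beta {p : ℕ} [Fact p.Prime] (hp2 : p ≠ 2)
    {ζ : L} (hζ : IsPrimitiveRoot ζ p) {r : ℕ}
    (hr : orderOf (r : ZMod p) = p - 1) (σ : L ≃ₐ[ℚ] L) (hσ : σ ζ = ζ ^ r)
    (lam : ℤ) (hlam : ((lam * ((r : ℤ) - 1) : ℤ) : ZMod p) = 1) (β : L)
    (hβ : β = ζ ^ lam * (∏ j ∈ Finset.range ((p - 1) / 2), (1 - ζ ^ r ^ j))) :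
    σ β = - β := by
  have hp := (Fact.out : p.Prime)
  have hodd := hp.eq_two_or_odd
  have h2 := hp.two_le
  set m := (p - 1) / 2 with hm
  have hm2 : m * 2 = p - 1 := by omega
  have hζ0 : ζ ≠ 0 := hζ.ne_zero hp.ne_zero
  have hrm : (r : ZMod p) ^ m = -1 := by
    have h1 : ((r : ZMod p) ^ m) ^ 2 = 1 := by
      rw [← pow_mul, hm2, ← hr, pow_orderOf_eq_one]
    rcases eq_or_eq_neg_of_sq_eq_sq _ 1 (h1.trans (one_pow 2).symm) with h | h
    · have := orderOf_dvd_of_pow_eq_one h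
      rw [hr] at this
      have := Nat.le_of_dvd (by omega) this
      omega
    · exact h
  have hinv : ζ ^ r ^ m * ζ = 1 := by
    rw [← pow_succ, ← pow_zero ζ]
    apply zeta_pow_congr hζ
    push_cast
    rw [hrm]; ring
  have h1 : (1 - ζ) ≠ 0 := by
    rw [sub_ne_zero]; exact (hζ.ne_one hp.one_lt).symm
  set α := ∏ j ∈ Finset.range m, (1 - ζ ^ r ^ j) with hα
  have hσα : σ α * (1 - ζ) = α * (1 - ζ ^ r ^ m) := by
    rw [hα, ← Finset.prod_range_succ, Finset.prod_range_succ', map_prod]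
    simp only [pow_zero, pow_one]
    congr 1
    refine Finset.prod_congr rfl fun j _ => ?_
    rw [map_sub, map_one, map_pow, hσ, ← pow_mul, pow_succ']
  have hσα' : σ α * ζ = - α := by
    apply mul_right_cancel₀ h1
    linear_combination ζ * hσα - α * hinv
  have hl : σ (ζ ^ lam) = ζ ^ lam * ζ := by
    rw [map_zpow₀, hσ, ← zpow_natCast ζ r, ← zpow_mul]
    have : ζ ^ (lam * ((r : ℤ) - 1) - 1) = 1 := by
      rw [hζ.zpow_eq_one_iff_dvd, ← ZMod.intCast_zmod_eq_zero_iff_dvd]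
      rw [Int.cast_sub, hlam]; simp
    rw [show (r : ℤ) * lam = (lam * ((r : ℤ) - 1) - 1) + (lam + 1) by ring,
      zpow_add₀ hζ0, this, one_mul, zpow_add_one₀ hζ0]
  rw [hβ, map_mul, hl]
  linear_combination ζ ^ lam * hσα'

theorem main {p : ℕ} [Fact p.Prime] [IsCyclotomicExtension {p} ℚ L]
    (n : ℕ) (hn1 : 1 < n) (hnodd : Odd n) (hpn : p % n = 1)
    (ζ : L) (hζ : IsPrimitiveRoot ζ p)
    (r : ℕ) (hr : orderOf (r : ZMod p) = p - 1)
    (lam : ℤ) (hlam : ((lam * ((r : ℤ) - 1) : ℤ) : ZMod p) = 1)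
    (σ : L ≃ₐ[ℚ] L) (hσ : σ ζ = ζ ^ r)
    (z : L)
    (hz : z = ζ ^ lam * (∏ j ∈ Finset.range ((p - 1) / 2), (1 - ζ ^ r ^ j)) * (1 - ζ))
    (x : L)
    (hx : x = ∑ j ∈ Finset.range ((p - 1) / n), (σ ^ ((j + 1) * n)) z)
    (I : Submodule ℤ L)
    (hI : I = Submodule.span ℤ {y | ∃ i < n, y = (σ ^ i) x})
    (K : IntermediateField ℚ L)
    (hK : K = IntermediateField.fixedField (Subgroup.zpowers (σ ^ n)))
    (hu : σ x / x ∈ Algebra.adjoin ℤ {ζ}) :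
    ∀ y : L, y ∈ I ↔ ∃ c : L, c ∈ K ∧ IsIntegral ℤ c ∧ y = x * c := by
  have hp := (Fact.out : p.Prime)
  have h2 := hp.two_le
  have hp2 : p ≠ 2 := by
    rintro rfl
    have : n ≤ 2 := by
      by_contra h
      rw [Nat.mod_eq_of_lt (by omega)] at hpn
      omega
    interval_cases n
    omega
  have hdvd : n ∣ p - 1 := (Nat.modEq_iff_dvd' (by omega)).mp (by
    rw [Nat.ModEq, hpn, Nat.mod_eq_of_lt hn1])
  set k := (p - 1) / n with hk
  have hnk : n * k = p - 1 := Nat.mul_div_cancel' hdvd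
  have hkeven : Even k := by
    have : Even (n * k) := by
      rw [hnk]
      exact (hp.eq_two_or_odd'.resolve_left hp2).tsub_odd odd_one
    rcases Nat.even_mul.mp this with h | h
    · exact absurd h (Nat.not_even_iff_odd.mpr hnodd)
    · exact h
  set β := ζ ^ lam * (∏ j ∈ Finset.range ((p - 1) / 2), (1 - ζ ^ r ^ j)) with hβ
  have hσβ : σ β = -β := sigma_beta hp2 hζ hr σ hσ lam hlam β hβ
  have hσβi : ∀ i, (σ ^ i) β = (-1) ^ i * β := by
    intro i
    induction i with
    | zero => simp
    | succ i ih =>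
      rw [pow_succ', AlgEquiv.mul_apply, ih, map_mul, hσβ, map_pow, map_neg, map_one, pow_succ]
      ring
  set θ := ∑ j ∈ Finset.range k, (-1) ^ j * (σ ^ (n * j)) ζ with hθ
  have hper : (σ ^ (n * k)) ζ = ζ := by
    rw [hnk, sigma_pow_zeta σ hσ]
    nth_rewrite 2 [← pow_one ζ]
    apply zeta_pow_congr hζ
    push_cast
    rw [← hr, pow_orderOf_eq_one]
  have hθ' : θ = ∑ j ∈ Finset.range k, (-1) ^ (j + 1) * (σ ^ (n * (j + 1))) ζ := by
    have h1 := Finset.sum_range_succ (fun j => (-1) ^ j * (σ ^ (n * j)) ζ) k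
    rw [Finset.sum_range_succ', hper, hkeven.neg_one_pow] at h1
    simp only [pow_zero, mul_zero, AlgEquiv.one_apply] at h1
    exact (add_right_cancel h1).symm
  have hsθ : (σ ^ n) θ = -θ := by
    conv_rhs => rw [hθ']
    rw [hθ, map_sum, ← Finset.sum_neg_distrib]
    refine Finset.sum_congr rfl fun j _ => ?_
    rw [map_mul, map_pow, map_neg, map_one, ← AlgEquiv.mul_apply, ← pow_add, Nat.mul_succ,
      add_comm n, pow_succ]
    ring
  have halt : ∑ j ∈ Finset.range k, (-1 : L) ^ (j + 1) = 0 := by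
    simp_rw [pow_succ]
    rw [← Finset.sum_mul, neg_one_geom_sum, if_pos hkeven, zero_mul]
  have hxθ : x = - (β * θ) := by
    have : x = ∑ j ∈ Finset.range k, (β * (-1) ^ (j + 1) -
        β * ((-1) ^ (j + 1) * (σ ^ (n * (j + 1))) ζ)) := by
      rw [hx]
      refine Finset.sum_congr rfl fun j _ => ?_
      rw [hz, map_mul, hσβi, map_sub, map_one, mul_comm (j + 1) n, pow_mul, hnodd.neg_one_pow]
      ring
    rw [this, Finset.sum_sub_distrib, ← Finset.mul_sum, ← Finset.mul_sum, halt, ← hθ']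
    ring
  have hxn : (σ ^ n) x = x := by
    rw [hxθ, map_neg, map_mul, hsθ, hσβi, hnodd.neg_one_pow]; ring
  have hmemK : ∀ c, c ∈ K ↔ (σ ^ n) c = c := by
    intro c
    rw [hK, IntermediateField.mem_fixedField_iff]
    constructor
    · intro h; exact h _ (Subgroup.mem_zpowers _)
    · intro h g hg
      have : Subgroup.zpowers (σ ^ n) ≤ MulAction.stabilizer (L ≃ₐ[ℚ] L) c := by
        rw [Subgroup.zpowers_le]; exact h
      exact this hg
  have hζint : IsIntegral ℤ ζ := hζ.isIntegral hp.pos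
  have hsint : ∀ (τ : L ≃ₐ[ℚ] L) c, IsIntegral ℤ c → IsIntegral ℤ (τ c) := by
    intro τ c hc
    exact hc.map (τ.toRingEquiv.toRingHom.toIntAlgHom)
  have hθint : IsIntegral ℤ θ := by
    rw [hθ]
    apply IsIntegral.sum
    intro j _
    exact (isIntegral_one.neg.pow j).mul (hsint _ _ hζint)
  have huint : IsIntegral ℤ (σ x / x) := by
    have := adjoin_le_integralClosure (R := ℤ) hζint hu
    exact this
  intro y
  constructor
  · intro hy
    rw [hI] at hy
    induction hy using Submodule.span_induction with
    | zero => exact ⟨0, K.zero_mem, isIntegral_zero, by simp⟩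
    | add a b _ _ ha hb =>
      obtain ⟨c, hc, hci, rfl⟩ := ha
      obtain ⟨d, hd, hdi, rfl⟩ := hb
      exact ⟨c + d, K.add_mem hc hd, hci.add hdi, by ring⟩
    | smul a b _ hb =>
      obtain ⟨d, hd, hdi, rfl⟩ := hb
      exact ⟨a • d, zsmul_mem hd a, hdi.smul a, by simp; ring⟩
    | mem a ha =>
      obtain ⟨i, _, rfl⟩ := ha
      by_cases hx0 : x = 0
      · exact ⟨0, K.zero_mem, isIntegral_zero, by simp [hx0]⟩
      refine ⟨(σ ^ i) x / x, ?_, ?_, by field_simp⟩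
      · rw [hmemK, map_div₀, hxn, ← AlgEquiv.mul_apply, ← pow_add, add_comm, pow_add,
          AlgEquiv.mul_apply, hxn]
      · clear * - huint hsint hx0
        induction i with
        | zero => simpa [hx0] using isIntegral_one
        | succ i ih =>
          have h := (hsint σ _ ih).mul huint
          have hs : σ x ≠ 0 := by simpa using hx0
          rw [map_div₀, ← AlgEquiv.mul_apply, ← pow_succ', div_mul_div_cancel₀ hs] at h
          exact h
  · rintro ⟨c, hc, hci, rfl⟩
    rw [hmemK] at hc
    obtain ⟨d, hd⟩ := anti hζ hr σ hσ n k hnk (θ * c) (hθint.mul hci) (by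
      rw [map_mul, hsθ, hc]; ring)
    rw [← hθ] at hd
    have : x * c = ∑ i ∈ Finset.range n, ((-1) ^ i * d i) • (σ ^ i) x := by
      have h1 : x * c = - (β * (θ * c)) := by rw [hxθ]; ring
      rw [h1, hd, Finset.mul_sum, ← Finset.sum_neg_distrib]
      refine Finset.sum_congr rfl fun i _ => ?_
      have h2 : (σ ^ i) x = - ((-1) ^ i * β * (σ ^ i) θ) := by
        rw [hxθ, map_neg, map_mul, hσβi]
      have h3 : ((-1 : L) ^ i) * (-1) ^ i = 1 := by
        rw [← mul_pow]; simp
      rw [h2, zsmul_eq_mul]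
      push_cast
      linear_combination (β * (d i : L) * (σ ^ i) θ) * h3
    rw [this, hI]
    apply Submodule.sum_mem
    intro i hi
    apply Submodule.smul_mem
    apply Submodule.subset_span
    exact ⟨i, Finset.mem_range.mp hi, rfl⟩

end Stmt7Aux

/-- If `σ(x)/x ∈ ℤ[ζ_p]`, then the ideal `I = ⟨x, σ(x), ..., σ^{n-1}(x)⟩_ℤ` of `O_K`
equals the principal ideal `x·O_K`, where `O_K` is the ring of integers of the fixed
field `K` of `σ^n`. -/
theorem stmt7 (p : ℕ+) (hp : (p : ℕ).Prime) (n : ℕ) (hn1 : 1 < n) (hnodd : Odd n)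
    (hpn : (p : ℕ) % n = 1)
    (ζ : CyclotomicField p ℚ) (hζ : IsPrimitiveRoot ζ p)
    (r : ℕ) (hr : orderOf (r : ZMod p) = (p : ℕ) - 1)
    (lam : ℤ) (hlam : ((lam * ((r : ℤ) - 1) : ℤ) : ZMod p) = 1)
    (σ : CyclotomicField p ℚ ≃ₐ[ℚ] CyclotomicField p ℚ) (hσ : σ ζ = ζ ^ r)
    (z : CyclotomicField p ℚ)
    (hz : z = ζ ^ lam * (∏ j ∈ Finset.range (((p : ℕ) - 1) / 2), (1 - ζ ^ r ^ j)) * (1 - ζ))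
    (x : CyclotomicField p ℚ)
    (hx : x = ∑ j ∈ Finset.range (((p : ℕ) - 1) / n), (σ ^ ((j + 1) * n)) z)
    (I : Submodule ℤ (CyclotomicField p ℚ))
    (hI : I = Submodule.span ℤ {y | ∃ i < n, y = (σ ^ i) x})
    (K : IntermediateField ℚ (CyclotomicField p ℚ))
    (hK : K = IntermediateField.fixedField (Subgroup.zpowers (σ ^ n)))
    (hu : σ x / x ∈ Algebra.adjoin ℤ {ζ}) :
    ∀ y : CyclotomicField p ℚ,
      y ∈ I ↔ ∃ c : CyclotomicField p ℚ, c ∈ K ∧ IsIntegral ℤ c ∧ y = x * c := by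
  have : Fact (p : ℕ).Prime := ⟨hp⟩
  have : NeZero (p : ℕ) := ⟨hp.ne_zero⟩
  have : IsCyclotomicExtension {(p : ℕ)} ℚ (CyclotomicField p ℚ) :=
    CyclotomicField.isCyclotomicExtension p ℚ
  exact Stmt7Aux.main n hn1 hnodd hpn ζ hζ r hr lam hlam σ hσ z hz x hx I hI K hK hu
end

section
/- If σ(x)/x ∈ ℤ[ζ_p], then |N_{K/Q}(x)| = p^{(n+1)/2}. -/
open Polynomial in
theorem aux_theta {R : Type*} [CommRing R] (k : ℕ) : ∀ (F : R[X]) (m : ℕ), (X - 1) ^ (m + k) ∣ F →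
    (X - 1) ^ m ∣ (fun G : R[X] => X * derivative G)^[k] F := by
  induction k with
  | zero => intro F m h; simpa using h
  | succ k ih =>
    intro F m h
    rw [Function.iterate_succ_apply]
    apply ih
    apply Dvd.dvd.mul_left
    have := pow_sub_one_dvd_derivative_of_pow_dvd h
    simpa using this

open Polynomial in
theorem aux_theta_sum {R : Type*} [CommRing R] {ι : Type*} (s : Finset ι) (e : ι → ℕ) (k : ℕ) :
    ∀ c : ι → R, (fun G : R[X] => X * derivative G)^[k] (∑ i ∈ s, C (c i) * X ^ (e i)) =
      ∑ i ∈ s, C (c i * (e i : R) ^ k) * X ^ (e i) := by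
  induction k with
  | zero => intro c; simp
  | succ k ih =>
    intro c
    rw [Function.iterate_succ_apply]
    have : X * derivative (∑ i ∈ s, C (c i) * X ^ (e i)) =
        ∑ i ∈ s, C (c i * (e i : R)) * X ^ (e i) := by
      rw [derivative_sum, Finset.mul_sum]
      refine Finset.sum_congr rfl fun i _ => ?_
      rw [derivative_C_mul_X_pow]
      rcases Nat.eq_zero_or_pos (e i) with h | h
      · simp [h]
      · obtain ⟨m, hm⟩ := Nat.exists_eq_succ_of_ne_zero h.ne'
        rw [hm]; simp only [Nat.succ_sub_one, pow_succ]; ring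
    rw [this, ih]
    refine Finset.sum_congr rfl fun i _ => ?_
    rw [pow_succ']; ring_nf

open Polynomial in
theorem aux_cyc (p : ℕ) [hp : Fact p.Prime] : cyclotomic p (ZMod p) = (X - 1) ^ (p - 1) := by
  have := cyclotomic_prime_mul_X_sub_one (ZMod p) p
  have h2 : (X ^ p - 1 : (ZMod p)[X]) = (X - 1) ^ p := by
    rw [sub_pow_char]; simp
  rw [h2] at this
  have h3 : ((X : (ZMod p)[X]) - 1) ≠ 0 := X_sub_C_ne_zero (1 : ZMod p)
  apply mul_right_cancel₀ h3
  rw [this, ← pow_succ, Nat.sub_add_cancel hp.out.one_lt.le]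

open Polynomial in
/-- The alternating period is not divisible by `(1-ζ)^d`. -/
theorem aux_not_dvd {K : Type*} [Field K] [CharZero K] (p : ℕ) [hp : Fact p.Prime] (ζ : K)
    (hζ : IsPrimitiveRoot ζ p) (d k : ℕ) (hd : d ≤ p - 1) (hkd : k < d) (e : ℕ → ℕ)
    (he : ∀ j, ((e j : ℕ) : ZMod p) ^ k = (-1) ^ (j + 1)) (y : K)
    (hy : y ∈ Algebra.adjoin ℤ {ζ})
    (h : ∑ j ∈ Finset.range d, (-1 : K) ^ j * ζ ^ (e j) = (1 - ζ) ^ d * y) : False := by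
  rw [Algebra.adjoin_singleton_eq_range_aeval] at hy
  obtain ⟨g, rfl⟩ := hy
  set F : ℤ[X] := ∑ j ∈ Finset.range d, C ((-1 : ℤ) ^ j) * X ^ (e j) with hF
  have h0 : aeval ζ (F - (1 - X) ^ d * g) = 0 := by
    rw [map_sub, hF]
    simp only [map_sum, map_mul, map_pow, aeval_X, map_sub, map_one, map_neg]
    have h' : _ = (1 - ζ) ^ d * (aeval ζ) g := h
    rw [← h']; simp
  have hint : IsIntegral ℤ ζ := hζ.isIntegral hp.out.pos
  have h1 := minpoly.isIntegrallyClosed_dvd hint h0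
  rw [← cyclotomic_eq_minpoly hζ hp.out.pos] at h1
  obtain ⟨q, hq⟩ := h1
  have h2 := congrArg (Polynomial.map (Int.castRingHom (ZMod p))) hq
  rw [Polynomial.map_mul, map_cyclotomic, aux_cyc] at h2
  have h3 : (X - 1) ^ d ∣ F.map (Int.castRingHom (ZMod p)) := by
    have : F.map (Int.castRingHom (ZMod p)) = (X - 1) ^ (p - 1) * q.map (Int.castRingHom (ZMod p))
      + (1 - X) ^ d * g.map (Int.castRingHom (ZMod p)) := by
      rw [← h2]; simp
    rw [this]
    apply dvd_add
    · exact Dvd.dvd.mul_right (pow_dvd_pow _ hd) _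
    · apply Dvd.dvd.mul_right
      apply pow_dvd_pow_of_dvd
      exact ⟨-1, by ring⟩
  have h4 : F.map (Int.castRingHom (ZMod p)) =
      ∑ j ∈ Finset.range d, C ((-1 : ZMod p) ^ j) * X ^ (e j) := by
    rw [hF, Polynomial.map_sum]
    simp
  have h5 := aux_theta k (F.map (Int.castRingHom (ZMod p))) (d - k)
    (by rwa [Nat.sub_add_cancel hkd.le])
  rw [h4, aux_theta_sum] at h5
  have h6 : (X - 1 : (ZMod p)[X]) ∣ _ := (dvd_pow_self _ (Nat.sub_ne_zero_of_lt hkd)).trans h5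
  obtain ⟨w, hw⟩ := h6
  have h7 := congrArg (Polynomial.eval 1) hw
  rw [eval_finsetSum] at h7
  have h8 : ∀ j ∈ Finset.range d, (eval 1 (C ((-1 : ZMod p) ^ j * (e j : ZMod p) ^ k) * X ^ (e j))) = -1 := by
    intro j _
    rw [he]
    simp [← pow_add, ← two_mul, pow_succ, pow_mul]
  rw [Finset.sum_congr rfl h8] at h7
  simp at h7
  rw [ZMod.natCast_eq_zero_iff] at h7
  have := Nat.le_of_dvd (by omega) h7
  have := hp.out.pos
  omega

theorem aux_reindex {M : Type*} [CommMonoid M] (p : ℕ) [hp : Fact p.Prime] (r : ZMod p)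
    (hr : orderOf r = p - 1) (f : ZMod p → M) :
    ∏ j ∈ Finset.range (p - 1), f (r ^ j) = ∏ a ∈ Finset.univ.erase 0, f a := by
  have h2 := hp.out.two_le
  have hr0 : r ≠ 0 := by
    rintro rfl
    have : orderOf (0 : ZMod p) = 0 := orderOf_eq_zero_iff'.2 fun n hn => by simp [hn.ne']
    omega
  have himg : Finset.image (fun j => r ^ j) (Finset.range (p - 1)) = Finset.univ.erase 0 := by
    apply Finset.eq_of_subset_of_card_le
    · intro a ha
      simp only [Finset.mem_image] at ha
      obtain ⟨j, _, rfl⟩ := ha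
      simp [hr0]
    · rw [Finset.card_image_of_injOn]
      · simp [ZMod.card]
      · intro a ha b hb hab
        simp only [Finset.coe_range, Set.mem_Iio] at ha hb
        exact pow_injOn_Iio_orderOf (by simpa [hr] using ha) (by simpa [hr] using hb) hab
  rw [← himg, Finset.prod_image]
  intro a ha b hb hab
  simp only [Finset.coe_range, Set.mem_Iio] at ha hb
  exact pow_injOn_Iio_orderOf (by simpa [hr] using ha) (by simpa [hr] using hb) hab

theorem aux_pow {K : Type*} [Field K] (p : ℕ) [hp : Fact p.Prime] (ζ : K)
    (hζ : IsPrimitiveRoot ζ p) (a : ℕ) (b : ZMod p) (h : (a : ZMod p) = b) : ζ ^ a = ζ ^ b.val := by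
  rw [← h, ZMod.val_natCast]
  exact pow_eq_pow_mod a hζ.pow_eq_one

theorem aux_range {M : Type*} [AddCommMonoid M] (p : ℕ) [hp : Fact p.Prime] (f : ℕ → M) :
    ∑ a : ZMod p, f a.val = ∑ i ∈ Finset.range p, f i := by
  refine Finset.sum_bij' (fun a _ => a.val) (fun i _ => (i : ZMod p)) ?_ ?_ ?_ ?_ ?_
  · intro a _; simpa using ZMod.val_lt a
  · simp
  · simp
  · intro a ha; exact ZMod.val_cast_of_lt (by simpa using ha)
  · simp

theorem aux_range_prod {M : Type*} [CommMonoid M] (p : ℕ) [hp : Fact p.Prime] (f : ℕ → M) :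
    ∏ a ∈ (Finset.univ.erase (0 : ZMod p)), f a.val = ∏ i ∈ Finset.range (p - 1), f (i + 1) := by
  have := hp.out.two_le
  have hv : ∀ i ∈ Finset.range (p - 1), ((i + 1 : ℕ) : ZMod p).val = i + 1 := by
    intro i hi
    have := Finset.mem_range.1 hi
    exact ZMod.val_cast_of_lt (by omega)
  symm
  refine Finset.prod_bij' (fun i _ => ((i + 1 : ℕ) : ZMod p)) (fun a _ => a.val - 1) ?_ ?_ ?_ ?_ ?_
  · intro i hi
    simp only [Finset.mem_erase, Finset.mem_univ, and_true]
    intro h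
    have := hv i hi
    rw [h] at this
    simp at this
  · intro a ha
    have h0 : a.val ≠ 0 := by simpa using ha
    have := ZMod.val_lt a
    simp; omega
  · intro i hi
    simp only [hv i hi]; omega
  · intro a ha
    have h0 : a.val ≠ 0 := by simpa using ha
    rw [Nat.sub_add_cancel (by omega)]; simp
  · intro i hi
    rw [hv i hi]

theorem aux_G {K : Type*} [Field K] (p : ℕ) [hp : Fact p.Prime] (ζ : K)
    (hζ : IsPrimitiveRoot ζ p) (r : ℕ) (hr : orderOf (r : ZMod p) = p - 1) (c : ℕ) :
    ∑ j ∈ Finset.range (p - 1), ζ ^ (r ^ j * c) = (if (c : ZMod p) = 0 then (p : K) else 0) - 1 := by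
  have h1 : ∑ j ∈ Finset.range (p - 1), ζ ^ (r ^ j * c) =
      ∑ a ∈ Finset.univ.erase (0 : ZMod p), ζ ^ (a * (c : ZMod p)).val := by
    have := aux_reindex (M := Multiplicative K) p (r : ZMod p) hr
      (fun a => Multiplicative.ofAdd (ζ ^ (a * (c : ZMod p)).val))
    rw [← ofAdd_sum, ← ofAdd_sum] at this
    rw [← Multiplicative.ofAdd.injective this]
    refine Finset.sum_congr rfl fun j _ => ?_
    apply aux_pow p ζ hζ; push_cast; rfl
  rw [h1]
  have h2 := Finset.sum_erase_add Finset.univ (fun a : ZMod p => ζ ^ (a * (c : ZMod p)).val)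
    (Finset.mem_univ 0)
  simp only [zero_mul, ZMod.val_zero, pow_zero] at h2
  rw [eq_sub_iff_add_eq, h2]
  split_ifs with hc
  · simp [hc, ZMod.card]
  · rw [← hζ.geom_sum_eq_zero hp.out.one_lt, ← aux_range p (fun i => ζ ^ i)]
    exact Fintype.sum_equiv (Equiv.mulRight₀ _ hc) _ _ (fun a => rfl)

theorem aux_P {K : Type*} [Field K] (p : ℕ) [hp : Fact p.Prime] (ζ : K)
    (hζ : IsPrimitiveRoot ζ p) (r : ℕ) (hr : orderOf (r : ZMod p) = p - 1) :
    ∏ j ∈ Finset.range (p - 1), (1 - ζ ^ r ^ j) = p := by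
  have := aux_reindex p (r : ZMod p) hr (fun a => 1 - ζ ^ a.val)
  rw [aux_range_prod p (fun i => 1 - ζ ^ i)] at this
  have h2 := hp.out.two_le
  obtain ⟨m, hm⟩ : ∃ m, p = m + 1 := ⟨p - 1, by omega⟩
  have h3 : ∏ i ∈ Finset.range (p - 1), (1 - ζ ^ (i + 1)) = (p : K) := by
    subst hm
    have := IsPrimitiveRoot.prod_one_sub_pow_eq_order hζ
    simpa using this
  rw [← h3, ← this]
  refine Finset.prod_congr rfl fun j _ => ?_
  rw [aux_pow p ζ hζ (r ^ j) _ (by push_cast; rfl)]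

theorem aux_half (p : ℕ) [hp : Fact p.Prime] (hp2 : p ≠ 2) (r : ZMod p)
    (hr : orderOf r = p - 1) : r ^ ((p - 1) / 2) = -1 := by
  have h2 := hp.out.two_le
  obtain ⟨m, hm⟩ := hp.out.odd_of_ne_two hp2
  have hm' : (p - 1) / 2 = m := by omega
  rw [hm']
  have hsq : (r ^ m) ^ 2 = 1 := by
    rw [← pow_mul, mul_comm, show 2 * m = p - 1 by omega, ← hr, pow_orderOf_eq_one]
  rcases mul_self_eq_one_iff.1 (by rwa [← sq] : r ^ m * r ^ m = 1) with h | h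
  · have := orderOf_dvd_of_pow_eq_one h
    have := Nat.le_of_dvd (by omega) this
    omega
  · exact h

theorem aux_sig {K : Type*} [Field K] [CharZero K] (ζ : K) (r : ℕ) (σ : K ≃ₐ[ℚ] K)
    (hσ : σ ζ = ζ ^ r) (i : ℕ) : (σ ^ i) ζ = ζ ^ r ^ i := by
  induction i with
  | zero => simp
  | succ i ih => rw [pow_succ', AlgEquiv.mul_apply, ih, map_pow, hσ, ← pow_mul, pow_succ']

theorem aux_beta {K : Type*} [Field K] [CharZero K] (p : ℕ) [hp : Fact p.Prime] (hp2 : p ≠ 2) (ζ : K)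
    (hζ : IsPrimitiveRoot ζ p) (r : ℕ) (hr : orderOf (r : ZMod p) = p - 1)
    (lam : ℤ) (hlam : ((lam * ((r : ℤ) - 1) : ℤ) : ZMod p) = 1)
    (σ : K ≃ₐ[ℚ] K) (hσ : σ ζ = ζ ^ r) (β : K)
    (hβ : β = ζ ^ lam * ∏ j ∈ Finset.range ((p - 1) / 2), (1 - ζ ^ r ^ j)) :
    σ β = -β ∧ (β ^ 2 = p ∨ β ^ 2 = -p) := by
  have hp1 := hp.out.two_le
  obtain ⟨m, hm⟩ := hp.out.odd_of_ne_two hp2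
  have hm' : (p - 1) / 2 = m := by omega
  have hhalf := aux_half p hp2 _ hr
  rw [hm'] at hhalf hβ
  have hζ0 : ζ ≠ 0 := hζ.ne_zero (by omega)
  obtain ⟨l, hl⟩ : ∃ l : ℕ, (l : ZMod p) = (lam : ZMod p) := ⟨(lam : ZMod p).val, by simp⟩
  have hzl : ζ ^ lam = ζ ^ l := by
    have h1 : ((lam - l : ℤ) : ZMod p) = 0 := by push_cast; rw [hl]; ring
    rw [ZMod.intCast_zmod_eq_zero_iff_dvd] at h1
    have h2 := (hζ.zpow_eq_one_iff_dvd (lam - l)).2 h1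
    rw [zpow_sub₀ hζ0, zpow_natCast, div_eq_one_iff_eq (pow_ne_zero _ hζ0)] at h2
    exact h2
  rw [hzl] at hβ
  push_cast at hlam
  rw [← hl] at hlam
  have hpe : ∀ a b : ℕ, (a : ZMod p) = (b : ZMod p) → ζ ^ a = ζ ^ b := by
    intro a b hab
    rw [aux_pow p ζ hζ a _ hab, aux_pow p ζ hζ b _ rfl]
  have e1 : ζ ^ (r * l) = ζ ^ (l + 1) := by
    apply hpe; push_cast; linear_combination hlam
  have e2 : ζ ^ r ^ m * ζ = 1 := by
    rw [← pow_succ, ← pow_zero ζ]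
    apply hpe; push_cast; rw [hhalf]; ring
  have e3 : ζ ^ (r ^ m * l) * ζ ^ l = 1 := by
    rw [← pow_add, ← pow_zero ζ]
    apply hpe; push_cast; rw [hhalf]; ring
  set α := ∏ j ∈ Finset.range m, (1 - ζ ^ r ^ j) with hα
  have hz1 : 1 - ζ ≠ 0 := sub_ne_zero.2 (hζ.ne_one (by omega)).symm
  have hsα : σ α * (1 - ζ) = α * (1 - ζ ^ r ^ m) := by
    have : σ α = ∏ j ∈ Finset.range m, (1 - ζ ^ r ^ (j + 1)) := by
      rw [hα, map_prod]
      refine Finset.prod_congr rfl fun j _ => ?_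
      rw [map_sub, map_one, map_pow, hσ, ← pow_mul, pow_succ']
    rw [this, hα, ← Finset.prod_range_succ (fun j => 1 - ζ ^ r ^ j), Finset.prod_range_succ']
    simp
  have hsβ : σ β = -β := by
    apply mul_right_cancel₀ hz1
    rw [hβ, map_mul, map_pow, hσ, ← pow_mul, e1, mul_assoc, hsα, pow_succ]
    linear_combination (-ζ ^ l * α) * e2
  refine ⟨hsβ, ?_⟩
  have hpow : ∀ i : ℕ, (σ ^ i) β = (-1) ^ i * β := by
    intro i
    induction i with
    | zero => simp
    | succ i ih => rw [pow_succ', AlgEquiv.mul_apply, ih, map_mul, hsβ]; simp [pow_succ]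
  have hmα : α * (σ ^ m) α = p := by
    rw [← aux_P p ζ hζ r hr, show p - 1 = m + m by omega, Finset.prod_range_add, ← hα]
    congr 1
    rw [hα, map_prod]
    refine Finset.prod_congr rfl fun j _ => ?_
    rw [map_sub, map_one, map_pow, aux_sig ζ r σ hσ, ← pow_mul, ← pow_add]
  have hfin : (-1) ^ m * β ^ 2 = p := by
    have : (-1) ^ m * β ^ 2 = β * (σ ^ m) β := by rw [hpow]; ring
    rw [this, hβ, map_mul, map_pow, aux_sig ζ r σ hσ, ← pow_mul, ← hmα]
    linear_combination (α * (σ ^ m) α) * e3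
  rcases neg_one_pow_eq_or K m with h | h
  · left; rw [h] at hfin; simpa using hfin
  · right; rw [h] at hfin; linear_combination -hfin

theorem aux_trace {K : Type*} [Field K] [CharZero K] (p : ℕ) [hp : Fact p.Prime] (hp2 : p ≠ 2)
    (ζ : K) (hζ : IsPrimitiveRoot ζ p) (r : ℕ) (hr : orderOf (r : ZMod p) = p - 1)
    (σ : K ≃ₐ[ℚ] K) (hσ : σ ζ = ζ ^ r) (n c : ℕ) (hn : Odd n) (hnc : n * (2 * c) = p - 1) (S : K)
    (hS : S = ∑ j ∈ Finset.range (2 * c), (-1) ^ j * ζ ^ r ^ ((j + 1) * n)) :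
    ∑ m ∈ Finset.range (p - 1), (σ ^ m) (S ^ 2) = (-1) ^ c * p * (2 * c : ℕ) := by
  have hp1 := hp.out.two_le
  have hn0 : 0 < n := hn.pos
  have hhalf := aux_half p hp2 _ hr
  have hnc2 : (p - 1) / 2 = n * c := by rw [← hnc, mul_left_comm]; simp
  rw [hnc2] at hhalf
  have hr0 : (r : ZMod p) ≠ 0 := by
    intro h
    rw [h] at hhalf
    have hc0 : n * c ≠ 0 := by
      intro h0; rw [mul_left_comm, h0] at hnc; omega
    rw [zero_pow hc0] at hhalf
    simpa using hhalf.symm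
  have hinj : ∀ a b : ℕ, a < 2 * c → b < 2 * c → (r : ZMod p) ^ (a * n) = (r : ZMod p) ^ (b * n) →
      a = b := by
    intro a b ha hb hab
    have h1 : a * n < p - 1 := by rw [← hnc, mul_comm n]; exact Nat.mul_lt_mul_of_pos_right ha hn0
    have h2 : b * n < p - 1 := by rw [← hnc, mul_comm n]; exact Nat.mul_lt_mul_of_pos_right hb hn0
    have := pow_injOn_Iio_orderOf (x := (r : ZMod p)) (by simpa [hr] using h1)
      (by simpa [hr] using h2) hab
    exact Nat.eq_of_mul_eq_mul_right hn0 this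
  have hterm : ∀ m, (σ ^ m) (S ^ 2) = ∑ j ∈ Finset.range (2 * c), ∑ l ∈ Finset.range (2 * c),
      (-1) ^ (j + l) * ζ ^ (r ^ m * (r ^ ((j + 1) * n) + r ^ ((l + 1) * n))) := by
    intro m
    have : (σ ^ m) S = ∑ j ∈ Finset.range (2 * c), (-1) ^ j * ζ ^ (r ^ m * r ^ ((j + 1) * n)) := by
      rw [hS, map_sum]
      refine Finset.sum_congr rfl fun j _ => ?_
      rw [map_mul, map_pow, map_pow, aux_sig ζ r σ hσ, map_neg, map_one, ← pow_mul]
    rw [map_pow, this, sq, Finset.sum_mul_sum]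
    refine Finset.sum_congr rfl fun j _ => Finset.sum_congr rfl fun l _ => ?_
    rw [mul_add, pow_add, pow_add]; ring
  simp_rw [hterm]
  rw [Finset.sum_comm]
  have hinner : ∀ j ∈ Finset.range (2 * c), ∑ m ∈ Finset.range (p - 1),
      ∑ l ∈ Finset.range (2 * c),
      (-1 : K) ^ (j + l) * ζ ^ (r ^ m * (r ^ ((j + 1) * n) + r ^ ((l + 1) * n))) = (-1) ^ c * p := by
    intro j hj
    rw [Finset.sum_comm]
    simp_rw [← Finset.mul_sum, aux_G p ζ hζ r hr, mul_sub, Finset.sum_sub_distrib]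
    have hz : ∑ l ∈ Finset.range (2 * c), (-1 : K) ^ (j + l) * 1 = 0 := by
      simp_rw [pow_add, mul_one, ← Finset.mul_sum]
      rw [neg_one_geom_sum]
      simp
    rw [hz, sub_zero]
    have hj' := Finset.mem_range.1 hj
    obtain ⟨l0, hl0, hpar, hcong⟩ : ∃ l0 < 2 * c, (-1 : K) ^ (j + l0) = (-1) ^ c ∧
        (r : ZMod p) ^ ((j + 1) * n) + (r : ZMod p) ^ ((l0 + 1) * n) = 0 := by
      rcases lt_or_ge j c with h | h
      · refine ⟨j + c, by omega, ?_, ?_⟩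
        · rw [← add_assoc, pow_add, ← two_mul, pow_mul]; simp
        · rw [show (j + c + 1) * n = (j + 1) * n + n * c by ring, pow_add, hhalf]; ring
      · refine ⟨j - c, by omega, ?_, ?_⟩
        · obtain ⟨t, rfl⟩ := Nat.exists_eq_add_of_le h
          rw [Nat.add_sub_cancel_left, add_assoc, ← two_mul, pow_add, pow_mul _ 2]; simp
        · obtain ⟨t, rfl⟩ := Nat.exists_eq_add_of_le h
          rw [Nat.add_sub_cancel_left, show (c + t + 1) * n = (t + 1) * n + n * c by ring,
            pow_add, hhalf]; ring
    rw [Finset.sum_eq_single l0]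
    · rw [if_pos (by push_cast; exact hcong), hpar]
    · intro l hl hne
      rw [if_neg, mul_zero]
      intro h0
      push_cast at h0
      apply hne
      apply hinj l l0 (Finset.mem_range.1 hl) hl0
      have h3 : (r : ZMod p) ^ ((l + 1) * n) = (r : ZMod p) ^ ((l0 + 1) * n) := by
        linear_combination h0 - hcong
      rw [add_mul, add_mul, pow_add, pow_add] at h3
      exact mul_right_cancel₀ (pow_ne_zero _ hr0) h3
    · intro h; exact absurd (Finset.mem_range.2 hl0) h
  rw [Finset.sum_congr rfl hinner]
  simp; ring

theorem aux_per {M : Type*} [AddCommMonoid M] (n : ℕ) (f : ℕ → M) (hf : ∀ i, f (n + i) = f i) (d : ℕ) :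
    ∑ m ∈ Finset.range (n * d), f m = d • ∑ i ∈ Finset.range n, f i := by
  have hf' : ∀ d i, f (n * d + i) = f i := by
    intro d
    induction d with
    | zero => simp
    | succ d ih => intro i; rw [mul_add, mul_one, add_comm (n * d), add_assoc, hf, ih]
  induction d with
  | zero => simp
  | succ d ih =>
    rw [mul_add, mul_one, Finset.sum_range_add, ih, succ_nsmul]
    simp_rw [hf']

theorem aux_ext {K : Type*} [Field K] [CharZero K] (p : ℕ) [hp : Fact p.Prime]
    [IsCyclotomicExtension {p} ℚ K] (ζ : K) (hζ : IsPrimitiveRoot ζ p) (σ τ : K ≃ₐ[ℚ] K)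
    (h : σ ζ = τ ζ) : σ = τ := by
  have : (σ : K →ₐ[ℚ] K) = τ := by
    apply (hζ.powerBasis ℚ).algHom_ext
    simpa using h
  exact AlgEquiv.ext fun y => DFunLike.congr_fun this y

theorem aux_fixed {K : Type*} [Field K] [CharZero K] (p : ℕ) [hp : Fact p.Prime]
    [IsCyclotomicExtension {p} ℚ K] (ζ : K) (hζ : IsPrimitiveRoot ζ p)
    (r : ℕ) (hr : orderOf (r : ZMod p) = p - 1)
    (σ : K ≃ₐ[ℚ] K) (hσ : σ ζ = ζ ^ r) (y : K) (hy : σ y = y) (hint : IsIntegral ℤ y) :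
    ∃ M : ℤ, y = M := by
  have hgal : IsGalois ℚ K := IsCyclotomicExtension.isGalois {p} ℚ K
  have hfd : FiniteDimensional ℚ K := IsCyclotomicExtension.finiteDimensional {p} ℚ K
  have hpow : ∀ i : ℕ, (σ ^ i) y = y := by
    intro i
    induction i with
    | zero => simp
    | succ i ih => rw [pow_succ', AlgEquiv.mul_apply, ih, hy]
  have hmem : y ∈ (⊥ : IntermediateField ℚ K) := by
    rw [IsGalois.mem_bot_iff_fixed]
    intro τ
    have h1 : IsPrimitiveRoot (τ ζ) p := hζ.map_of_injective τ.injective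
    obtain ⟨a, ha, hcop, hτ⟩ := (hζ.isPrimitiveRoot_iff).1 h1
    have ha0 : (a : ZMod p) ≠ 0 := by
      intro h
      rw [ZMod.natCast_eq_zero_iff] at h
      exact hp.out.one_lt.ne' (Nat.Coprime.eq_one_of_dvd hcop.symm h)
    obtain ⟨i, hi⟩ : ∃ i : ℕ, (r : ZMod p) ^ i = a := by
      by_contra hcon
      push Not at hcon
      have h2 := aux_reindex (M := ℕ) p (r : ZMod p) hr (fun b => if b = (a : ZMod p) then 0 else 1)
      rw [Finset.prod_eq_zero (i := (a : ZMod p)) (by simp [ha0]) (by simp),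
        Finset.prod_congr rfl (fun j _ => if_neg (hcon j))] at h2
      simp at h2
    have : τ = σ ^ i := by
      apply aux_ext p ζ hζ
      rw [aux_sig ζ r σ hσ, ← hτ, aux_pow p ζ hζ a _ rfl, aux_pow p ζ hζ (r ^ i) (a : ZMod p)]
      push_cast; exact hi
    rw [this, hpow]
  obtain ⟨q, hq⟩ := IntermediateField.mem_bot.1 hmem
  rw [← hq] at hint
  have hq2 : IsIntegral ℤ q := (isIntegral_algebraMap_iff (algebraMap ℚ K).injective).1 hint
  obtain ⟨M, hM⟩ := IsIntegrallyClosed.isIntegral_iff.1 hq2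
  exact ⟨M, by rw [← hq, ← hM]; simp⟩

theorem aux_intdvd {K : Type*} [Field K] [CharZero K] (a b : ℤ) (hb : b ≠ 0)
    (h : IsIntegral ℤ ((a : K) / (b : K))) : b ∣ a := by
  let _ : Algebra ℚ K := DivisionRing.toRatAlgebra
  have h1 : (a : K) / (b : K) = algebraMap ℚ K ((a : ℚ) / (b : ℚ)) := by simp
  rw [h1] at h
  have hq2 : IsIntegral ℤ ((a : ℚ) / (b : ℚ)) :=
    (isIntegral_algebraMap_iff (algebraMap ℚ K).injective).1 h
  obtain ⟨M, hM⟩ := IsIntegrallyClosed.isIntegral_iff.1 hq2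
  have hb' : (b : ℚ) ≠ 0 := by exact_mod_cast hb
  refine ⟨M, ?_⟩
  simp only [algebraMap_int_eq, eq_intCast] at hM
  field_simp at hM
  exact_mod_cast (by linear_combination -hM : (a : ℚ) = b * M)

theorem aux_sigint {K : Type*} [Field K] [CharZero K] (σ : K ≃ₐ[ℚ] K) (y : K) (hy : IsIntegral ℤ y)
    (i : ℕ) : IsIntegral ℤ ((σ ^ i) y) :=
  hy.map (((σ ^ i : K ≃ₐ[ℚ] K) : K →+* K).toIntAlgHom)

theorem aux_main {K : Type*} [Field K] [CharZero K] (p : ℕ) [hp : Fact p.Prime] (hp2 : p ≠ 2)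
    [IsCyclotomicExtension {p} ℚ K] (ζ : K) (hζ : IsPrimitiveRoot ζ p) (n c : ℕ) (hn : Odd n)
    (hnc : n * (2 * c) = p - 1)
    (r : ℕ) (hr : orderOf (r : ZMod p) = p - 1)
    (lam : ℤ) (hlam : ((lam * ((r : ℤ) - 1) : ℤ) : ZMod p) = 1)
    (σ : K ≃ₐ[ℚ] K) (hσ : σ ζ = ζ ^ r)
    (z : K)
    (hz : z = ζ ^ lam * (∏ j ∈ Finset.range ((p - 1) / 2), (1 - ζ ^ r ^ j)) * (1 - ζ))
    (x : K)
    (hx : x = ∑ j ∈ Finset.range (2 * c), (σ ^ ((j + 1) * n)) z)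
    (hu : σ x / x ∈ Algebra.adjoin ℤ {ζ}) :
    (∏ i ∈ Finset.range n, (σ ^ i) x) = (p : K) ^ ((n + 1) / 2) ∨
      (∏ i ∈ Finset.range n, (σ ^ i) x) = -(p : K) ^ ((n + 1) / 2) := by
  have hp1 := hp.out.two_le
  have hn0 : 0 < n := hn.pos
  have hc0 : 0 < c := by
    rcases Nat.eq_zero_or_pos c with h | h
    · subst h; simp at hnc; omega
    · exact h
  have hpK : (p : K) ≠ 0 := by exact_mod_cast hp.out.ne_zero
  have hζint : IsIntegral ℤ ζ := hζ.isIntegral hp.out.pos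
  have hhalf := aux_half p hp2 _ hr
  rw [show (p - 1) / 2 = n * c by rw [← hnc, mul_left_comm]; simp] at hhalf
  -- the element β
  set β := ζ ^ lam * (∏ j ∈ Finset.range ((p - 1) / 2), (1 - ζ ^ r ^ j)) with hβ
  obtain ⟨hsβ, hβ2⟩ := aux_beta p hp2 ζ hζ r hr lam hlam σ hσ β hβ
  have hpowβ : ∀ i : ℕ, (σ ^ i) β = (-1) ^ i * β := by
    intro i
    induction i with
    | zero => simp
    | succ i ih => rw [pow_succ', AlgEquiv.mul_apply, ih, map_mul, hsβ]; simp [pow_succ]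
  obtain ⟨S, hS⟩ : ∃ S : K, S = ∑ j ∈ Finset.range (2 * c), (-1) ^ j * ζ ^ r ^ ((j + 1) * n) :=
    ⟨_, rfl⟩
  have hSint : IsIntegral ℤ S := by
    rw [hS]
    refine IsIntegral.sum _ fun j _ => ?_
    exact ((isIntegral_one.neg).pow _).mul (hζint.pow _)
  have hxS : x = β * S := by
    have h1 : ∀ j ∈ Finset.range (2 * c), (σ ^ ((j + 1) * n)) z =
        -β * (-1) ^ j + β * ((-1) ^ j * ζ ^ r ^ ((j + 1) * n)) := by
      intro j _
      rw [hz, map_mul, hpowβ, map_sub, map_one, aux_sig ζ r σ hσ, mul_comm (j + 1) n, pow_mul,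
        hn.neg_one_pow, pow_succ]
      ring
    rw [hx, Finset.sum_congr rfl h1, Finset.sum_add_distrib, ← Finset.mul_sum, ← Finset.mul_sum,
      neg_one_geom_sum, ← hS]
    simp
  have hx2 : x ^ 2 = p * S ^ 2 ∨ x ^ 2 = -(p * S ^ 2) := by
    rw [hxS, mul_pow]
    rcases hβ2 with h | h
    · left; rw [h]
    · right; rw [h]; ring
  -- σ^(p-1) = 1
  have hσ1 : σ ^ (p - 1) = 1 := by
    apply aux_ext p ζ hζ
    rw [aux_sig ζ r σ hσ, aux_pow p ζ hζ (r ^ (p - 1)) 1 (by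
      push_cast; rw [← hr, pow_orderOf_eq_one])]
    have : Fact (1 < p) := ⟨hp.out.one_lt⟩
    simp [ZMod.val_one]
  have hσn : (σ ^ n) x = x := by
    have h1 : (σ ^ n) x = ∑ j ∈ Finset.range (2 * c), (σ ^ ((j + 1 + 1) * n)) z := by
      rw [hx, map_sum]
      refine Finset.sum_congr rfl fun j _ => ?_
      rw [← AlgEquiv.mul_apply, ← pow_add]
      congr 2; ring
    have h2 := Finset.sum_range_succ (fun j => (σ ^ ((j + 1) * n)) z) (2 * c)
    rw [Finset.sum_range_succ', ← h1, ← hx] at h2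
    have h3 : σ ^ ((2 * c + 1) * n) = σ ^ ((0 + 1) * n) := by
      rw [show (2 * c + 1) * n = n * (2 * c) + (0 + 1) * n by ring, pow_add, hnc, hσ1, one_mul]
    rw [h3] at h2
    exact add_right_cancel h2
  have htr := aux_trace p hp2 ζ hζ r hr σ hσ n c hn hnc S hS
  have hsum : ∑ i ∈ Finset.range n, ((σ ^ i) x) ^ 2 = (p : K) ^ 2 ∨
      ∑ i ∈ Finset.range n, ((σ ^ i) x) ^ 2 = -(p : K) ^ 2 := by
    have h1 := aux_per n (fun m => ((σ ^ m) x) ^ 2) (fun i => by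
      simp only [add_comm n i, pow_add σ, AlgEquiv.mul_apply, hσn]) (2 * c)
    rw [hnc] at h1
    obtain ⟨s, hs, hxs⟩ : ∃ s : ℚ, (s = 1 ∨ s = -1) ∧ x ^ 2 = s * (p * S ^ 2) := by
      rcases hx2 with h | h
      · exact ⟨1, Or.inl rfl, by simp [h]⟩
      · exact ⟨-1, Or.inr rfl, by simp [h]⟩
    have h2 : ∑ m ∈ Finset.range (p - 1), ((σ ^ m) x) ^ 2 = s * (p * ((-1) ^ c * p * (2 * c : ℕ))) := by
      rw [← htr, Finset.mul_sum, Finset.mul_sum]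
      refine Finset.sum_congr rfl fun m _ => ?_
      rw [← map_pow, hxs, map_mul, map_mul, map_natCast, map_ratCast]
    rw [h2, nsmul_eq_mul] at h1
    have h3 : ((2 * c : ℕ) : K) ≠ 0 := by
      have : 2 * c ≠ 0 := by omega
      exact_mod_cast this
    have h4 : ∑ i ∈ Finset.range n, ((σ ^ i) x) ^ 2 = s * (-1) ^ c * (p : K) ^ 2 := by
      apply mul_left_cancel₀ h3
      rw [← h1]; ring
    rw [h4]
    rcases hs with rfl | rfl <;> rcases neg_one_pow_eq_or K c with h | h <;> simp [h]
  have hx0 : x ≠ 0 := by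
    intro h
    rw [h] at hsum
    simp only [map_zero] at hsum
    rcases hsum with h | h <;> simp [hpK] at h <;> exact hpK (by simpa using h.symm)
  have hsx0 : ∀ i, (σ ^ i) x ≠ 0 := fun i => (map_ne_zero _).2 hx0
  have hxint : IsIntegral ℤ x := by
    rw [← IsIntegral.pow_iff (n := 2) (by norm_num)]
    have : IsIntegral ℤ ((p : K) * S ^ 2) := (isIntegral_natCast p).mul (hSint.pow 2)
    rcases hx2 with h | h <;> rw [h]
    · exact this
    · exact this.neg
  have hclos : IsIntegralClosure (Algebra.adjoin ℤ ({ζ} : Set K)) ℤ K :=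
    IsCyclotomicExtension.Rat.isIntegralClosure_adjoin_singleton_of_prime hζ
  have huint : IsIntegral ℤ (σ x / x) := adjoin_le_integralClosure hζint hu
  have hui : ∀ i : ℕ, IsIntegral ℤ ((σ ^ i) x / x) := by
    intro i
    induction i with
    | zero => simpa [hx0] using isIntegral_one
    | succ i ih =>
      have h1 := (aux_sigint σ _ huint i).mul ih
      have h2 : (σ ^ i) (σ x / x) * ((σ ^ i) x / x) = (σ ^ (i + 1)) x / x := by
        rw [map_div₀, pow_succ, AlgEquiv.mul_apply]
        have := hsx0 i
        field_simp
      rwa [h2] at h1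
  have hvi : ∀ i ∈ Finset.range n, IsIntegral ℤ (x / (σ ^ i) x) := by
    intro i hi
    have h1 := aux_sigint σ _ (hui (n - i)) i
    rw [map_div₀, ← AlgEquiv.mul_apply, ← pow_add,
      Nat.add_sub_cancel' (Finset.mem_range.1 hi).le, hσn] at h1
    exact h1
  set N := ∏ i ∈ Finset.range n, (σ ^ i) x with hN
  have hNint : IsIntegral ℤ N := IsIntegral.prod _ fun i _ => aux_sigint σ x hxint i
  have hN0 : N ≠ 0 := Finset.prod_ne_zero_iff.2 fun i _ => hsx0 i
  have hσN : σ N = N := by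
    have h1 : σ N = ∏ i ∈ Finset.range n, (σ ^ (i + 1)) x := by
      rw [hN, map_prod]
      refine Finset.prod_congr rfl fun i _ => ?_
      rw [pow_succ', AlgEquiv.mul_apply]
    have h2 := Finset.prod_range_succ (fun i => (σ ^ i) x) n
    rw [Finset.prod_range_succ', ← h1, ← hN, hσn] at h2
    simp only [pow_zero, AlgEquiv.one_apply] at h2
    exact mul_right_cancel₀ hx0 h2
  obtain ⟨M, hM⟩ := aux_fixed p ζ hζ r hr σ hσ N hσN hNint
  -- N divides a power of p
  have hpx : IsIntegral ℤ ((p : K) ^ 2 / x ^ 2) := by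
    have h1 : IsIntegral ℤ (∑ i ∈ Finset.range n, ((σ ^ i) x / x) ^ 2) :=
      IsIntegral.sum _ fun i _ => (hui i).pow 2
    simp_rw [div_pow] at h1
    rw [← Finset.sum_div] at h1
    rcases hsum with h | h <;> rw [h] at h1
    · exact h1
    · have := h1.neg; rwa [neg_div, neg_neg] at this
  have hMdvd : M ^ 2 ∣ (p : ℤ) ^ (2 * n) := by
    have hM0 : M ≠ 0 := by rintro rfl; apply hN0; simpa using hM
    apply aux_intdvd (K := K) _ _ (pow_ne_zero 2 hM0)
    have h1 : IsIntegral ℤ (∏ i ∈ Finset.range n, (σ ^ i) ((p : K) ^ 2 / x ^ 2)) :=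
      IsIntegral.prod _ fun i _ => aux_sigint σ _ hpx i
    have h2 : (∏ i ∈ Finset.range n, (σ ^ i) ((p : K) ^ 2 / x ^ 2)) = (p : K) ^ (2 * n) / N ^ 2 := by
      simp_rw [map_div₀, map_pow, map_natCast]
      rw [Finset.prod_div_distrib, Finset.prod_const, Finset.card_range, ← pow_mul,
        Finset.prod_pow]
    rw [h2, hM] at h1
    push_cast
    exact h1
  obtain ⟨k, hk⟩ : ∃ k, M.natAbs = p ^ k := by
    have h1 : M ∣ (p : ℤ) ^ (2 * n) := (dvd_pow_self M two_ne_zero).trans hMdvd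
    have h2 : M.natAbs ∣ p ^ (2 * n) := by
      have := Int.natAbs_dvd_natAbs.2 h1
      simpa [Int.natAbs_pow] using this
    obtain ⟨k, _, hk⟩ := (Nat.dvd_prime_pow hp.out).1 h2
    exact ⟨k, hk⟩
  have hNk : N = (p : K) ^ k ∨ N = -(p : K) ^ k := by
    rcases Int.natAbs_eq M with h | h <;> rw [hM, h, hk]
    · left; push_cast; rfl
    · right; push_cast; rfl
  suffices hfin : 2 * k = n + 1 by
    rw [show (n + 1) / 2 = k by omega]; exact hNk
  -- units
  obtain ⟨w, hw⟩ : ∃ w, w = ∏ i ∈ Finset.range n, x / (σ ^ i) x := ⟨_, rfl⟩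
  have hwint : IsIntegral ℤ w := by rw [hw]; exact IsIntegral.prod _ hvi
  have hw' : w = x ^ n / N := by rw [hw, Finset.prod_div_distrib]; simp [hN]
  have hwinv : IsIntegral ℤ (w⁻¹) := by
    rw [hw, ← Finset.prod_inv_distrib]
    simp_rw [inv_div]
    exact IsIntegral.prod _ fun i _ => hui i
  have hw0 : w ≠ 0 := by rw [hw']; exact div_ne_zero (pow_ne_zero _ hx0) hN0
  have hNw : N ^ 2 = (p : K) ^ (2 * k) := by
    rcases hNk with h | h <;> rw [h] <;> ring
  obtain ⟨s, hs, hrel⟩ : ∃ s : K, (s = 1 ∨ s = -1) ∧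
      (p : K) ^ (2 * k) * w ^ 2 = s * ((p : K) ^ n * S ^ (2 * n)) := by
    have h1 : (p : K) ^ (2 * k) * w ^ 2 = (x ^ 2) ^ n := by
      rw [← hNw, hw']; field_simp; ring
    rw [h1]
    rcases hx2 with h | h
    · exact ⟨1, Or.inl rfl, by rw [h]; ring⟩
    · exact ⟨-1, Or.inr rfl, by rw [h, hn.neg_pow]; ring⟩
  have hsint : IsIntegral ℤ s := by
    rcases hs with rfl | rfl
    · exact isIntegral_one
    · exact isIntegral_one.neg
  have hss : s * s = 1 := by rcases hs with rfl | rfl <;> ring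
  have hlow : n ≤ 2 * k := by
    by_contra hlt
    push Not at hlt
    obtain ⟨t, ht⟩ := Nat.exists_eq_add_of_lt hlt
    have h1 : IsIntegral ℤ (s * S ^ (2 * n) * (w⁻¹) ^ 2) :=
      (hsint.mul (hSint.pow _)).mul (hwinv.pow 2)
    have h2 : s * S ^ (2 * n) * (w⁻¹) ^ 2 = ((1 : ℤ) : K) / (((p : ℤ) ^ (t + 1) : ℤ) : K) := by
      have h3 : w ^ 2 = s * ((p : K) ^ (t + 1) * S ^ (2 * n)) := by
        apply mul_left_cancel₀ (pow_ne_zero (2 * k) hpK)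
        rw [hrel, show (p : K) ^ n = (p : K) ^ (2 * k) * (p : K) ^ (t + 1) by
          rw [← pow_add]; congr 1]
        ring
      push_cast
      field_simp
      rw [h3]; ring
    rw [h2] at h1
    have h4 := aux_intdvd (K := K) _ _ (pow_ne_zero _ (by exact_mod_cast hp.out.ne_zero)) h1
    have h5 : (p : ℤ) ∣ 1 := (dvd_pow_self _ (Nat.succ_ne_zero t)).trans h4
    have h6 : p ∣ 1 := by exact_mod_cast h5
    exact hp.out.one_lt.ne' (Nat.dvd_one.1 h6)
  by_contra hne
  have hge : n + 2 ≤ 2 * k := by obtain ⟨t, ht⟩ := hn; omega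
  obtain ⟨t, ht⟩ := Nat.exists_eq_add_of_le hge
  have hS2 : S ^ (2 * n) = (p : K) ^ 2 * (s * (p : K) ^ t * w ^ 2) := by
    apply mul_left_cancel₀ (pow_ne_zero n hpK)
    have h1 : (p : K) ^ n * S ^ (2 * n) = s * ((p : K) ^ (2 * k) * w ^ 2) := by
      rw [hrel]; linear_combination (-(p : K) ^ n * S ^ (2 * n)) * hss
    rw [h1, ht]; ring
  have hz1 : 1 - ζ ≠ 0 := sub_ne_zero.2 (hζ.ne_one (by omega)).symm
  have hpz : IsIntegral ℤ ((p : K) / (1 - ζ) ^ (p - 1)) := by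
    rw [← aux_P p ζ hζ r hr]
    have h1 : IsIntegral ℤ (∏ j ∈ Finset.range (p - 1), ((1 - ζ ^ r ^ j) / (1 - ζ))) := by
      refine IsIntegral.prod _ fun j _ => ?_
      have : (1 - ζ ^ r ^ j) / (1 - ζ) = ∑ i ∈ Finset.range (r ^ j), ζ ^ i := by
        rw [div_eq_iff hz1, geom_sum_mul_neg]
      rw [this]
      exact IsIntegral.sum _ fun i _ => hζint.pow i
    rw [Finset.prod_div_distrib] at h1
    simpa using h1
  have hSq : IsIntegral ℤ (S / (1 - ζ) ^ (2 * c)) := by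
    apply IsIntegral.of_pow (n := 2 * n) (by omega)
    have h1 : (S / (1 - ζ) ^ (2 * c)) ^ (2 * n) =
        ((p : K) / (1 - ζ) ^ (p - 1)) ^ 2 * (s * (p : K) ^ t * w ^ 2) := by
      rw [div_pow, hS2, ← hnc, div_pow, ← pow_mul, ← pow_mul,
        show 2 * c * (2 * n) = n * (2 * c) * 2 by ring]
      ring
    rw [h1]
    exact (hpz.pow 2).mul ((hsint.mul ((isIntegral_natCast p).pow t)).mul (hwint.pow 2))
  obtain ⟨y, hy⟩ := hclos.isIntegral_iff.1 hSq
  have hy' : (y : K) = S / (1 - ζ) ^ (2 * c) := hy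
  refine aux_not_dvd p ζ hζ (2 * c) c ?_ (by omega) (fun j => r ^ ((j + 1) * n)) ?_ y y.2 ?_
  · rw [← hnc]; exact Nat.le_mul_of_pos_left _ hn0
  · intro j
    push_cast
    rw [← pow_mul, show (j + 1) * n * c = (n * c) * (j + 1) by ring, pow_mul, hhalf]
  · rw [← hS, hy', mul_div_cancel₀ _ (pow_ne_zero _ hz1)]

/-- If `σ(x)/x ∈ ℤ[ζ_p]`, then `|N_{K/ℚ}(x)| = p^{(n+1)/2}`, where the norm of `x`
from the degree-`n` field `K` is the product of its `n` conjugates `σ^i(x)`. -/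
theorem stmt8 (p : ℕ+) (hp : (p : ℕ).Prime) (n : ℕ) (hn1 : 1 < n) (hnodd : Odd n)
    (hpn : (p : ℕ) % n = 1)
    (ζ : CyclotomicField p ℚ) (hζ : IsPrimitiveRoot ζ p)
    (r : ℕ) (hr : orderOf (r : ZMod p) = (p : ℕ) - 1)
    (lam : ℤ) (hlam : ((lam * ((r : ℤ) - 1) : ℤ) : ZMod p) = 1)
    (σ : CyclotomicField p ℚ ≃ₐ[ℚ] CyclotomicField p ℚ) (hσ : σ ζ = ζ ^ r)
    (z : CyclotomicField p ℚ)
    (hz : z = ζ ^ lam * (∏ j ∈ Finset.range (((p : ℕ) - 1) / 2), (1 - ζ ^ r ^ j)) * (1 - ζ))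
    (x : CyclotomicField p ℚ)
    (hx : x = ∑ j ∈ Finset.range (((p : ℕ) - 1) / n), (σ ^ ((j + 1) * n)) z)
    (hu : σ x / x ∈ Algebra.adjoin ℤ {ζ}) :
    (∏ i ∈ Finset.range n, (σ ^ i) x) = ((p : ℕ) : CyclotomicField p ℚ) ^ ((n + 1) / 2) ∨
      (∏ i ∈ Finset.range n, (σ ^ i) x) = -((p : ℕ) : CyclotomicField p ℚ) ^ ((n + 1) / 2) := by
  have hfact : Fact (p : ℕ).Prime := ⟨hp⟩
  have hcyc : IsCyclotomicExtension {(p : ℕ)} ℚ (CyclotomicField p ℚ) :=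
    CyclotomicField.isCyclotomicExtension _ _
  have hp2 : (p : ℕ) ≠ 2 := by
    intro h
    rw [h] at hpn
    have h3 : n ≠ 2 := by rintro rfl; exact absurd hnodd (by decide)
    rw [Nat.mod_eq_of_lt (by omega)] at hpn
    omega
  obtain ⟨m, hm⟩ := hp.odd_of_ne_two hp2
  have hdvd : n ∣ (p : ℕ) - 1 := by
    rw [← hpn]; exact Nat.dvd_sub_mod _
  have hdvd2 : n ∣ 2 * m := by rwa [hm, Nat.add_sub_cancel] at hdvd
  have hcop : Nat.Coprime n 2 := (Nat.coprime_two_right).2 hnodd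
  obtain ⟨c, hc⟩ := hcop.dvd_of_dvd_mul_left hdvd2
  have hnc : n * (2 * c) = (p : ℕ) - 1 := by rw [hm, hc, Nat.add_sub_cancel]; ring
  have hdiv : ((p : ℕ) - 1) / n = 2 * c := by
    rw [← hnc]; exact Nat.mul_div_cancel_left _ (by omega)
  rw [hdiv] at hx
  exact aux_main (p : ℕ) hp2 ζ hζ n c hnodd hnc r hr lam hlam σ hσ z hz x hx hu
end

section
/- Let K and L be number fields with K ∩ L = Q, [K:Q] = l, [L:Q] = k, and coprime discriminants. Then the discriminant of the compositum KL equals d_K^k · d_L^l. -/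
open NumberField
open scoped Pointwise

theorem inertia_le_fix (K N : Type*) [Field K] [NumberField K] [Field N] [NumberField N]
    [Algebra K N] [IsGalois ℚ N] (p : ℤ) (hp : Prime p) (hpK : ¬ p ∣ discr K)
    (P : Ideal (𝓞 N)) [P.IsPrime] (hP : (p : 𝓞 N) ∈ P) :
    P.inertia Gal(N/ℚ) ≤ fixingSubgroup Gal(N/ℚ) (Set.range (algebraMap K N)) := by
  set G := Gal(N/ℚ)
  set H := fixingSubgroup G (Set.range (algebraMap K N))
  have : IsGaloisGroup H K N := IsGaloisGroup.of_isScalarTower G ℚ N K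
  have : IsGaloisGroup H (𝓞 K) (𝓞 N) := IsGaloisGroup.of_isFractionRing H (𝓞 K) (𝓞 N) K N
  have : IsGaloisGroup G ℤ (𝓞 N) := IsGaloisGroup.of_isFractionRing G ℤ (𝓞 N) ℚ N
  let q := P.under (𝓞 K)
  have hpq : (p : 𝓞 K) ∈ q := by simpa [q, Ideal.under, Ideal.mem_comap] using hP
  have hq0 : q ≠ ⊥ := by
    intro h
    rw [h] at hpq
    exact hp.ne_zero (by simpa using hpq)
  have : Finite (𝓞 K ⧸ q) := Ring.HasFiniteQuotients.finiteQuotient hq0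
  have hpz : p ∈ P.under ℤ := by simpa [Ideal.under, Ideal.mem_comap] using hP
  have hp0 : P.under ℤ ≠ ⊥ := by
    intro h
    rw [h] at hpz
    exact hp.ne_zero (by simpa using hpz)
  have : Finite (ℤ ⧸ P.under ℤ) := Ring.HasFiniteQuotients.finiteQuotient hp0
  have : (P.under ℤ).IsMaximal := Ideal.IsPrime.isMaximal inferInstance hp0
  have : q.IsMaximal := Ideal.IsPrime.isMaximal inferInstance hq0
  have hur := (not_dvd_discr_iff_forall_mem K (𝓞 K) hp).mp hpK q inferInstance hpq
  have e1 : q.ramificationIdx ℤ = 1 := Ideal.ramificationIdx_eq_one_iff.mpr hur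
  have ht := Ideal.ramificationIdx_tower (R := ℤ) q P
  have c1 : Nat.card (P.inertia G) = P.ramificationIdx ℤ := by
    rw [Ideal.card_inertia_eq_ramificationIdxIn (P.under ℤ) P,
      Ideal.ramificationIdxIn_eq_ramificationIdx _ P G]
  have c2 : Nat.card (P.inertia H) = P.ramificationIdx (𝓞 K) := by
    rw [Ideal.card_inertia_eq_ramificationIdxIn q P,
      Ideal.ramificationIdxIn_eq_ramificationIdx _ P H]
  rw [e1, one_mul, ← c1, ← c2] at ht
  have hm : (P.inertia H).map H.subtype = P.inertia G ⊓ H := AddSubgroup.inertia_map_subtype _ _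
  have hcard : Nat.card ((P.inertia H).map H.subtype) = Nat.card (P.inertia H) :=
    Nat.card_congr ((P.inertia H).equivMapOfInjective _ H.subtype_injective).toEquiv.symm
  have := Subgroup.eq_of_le_of_card_ge (H := P.inertia G ⊓ H) (K := P.inertia G) inf_le_left
    (by rw [← hm, hcard, ht])
  exact inf_eq_left.mp this

theorem not_dvd_closure (K N : Type*) [Field K] [NumberField K] [Field N] [NumberField N]
    [Algebra K N] [IsGalois ℚ N] [IsNormalClosure ℚ K N] (p : ℤ) (hp : Prime p)
    (hpK : ¬ p ∣ discr K) : ¬ p ∣ discr N := by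
  rw [not_dvd_discr_iff_forall_mem N (𝓞 N) hp]
  intro P _ hP
  have : IsGaloisGroup Gal(N/ℚ) ℤ (𝓞 N) := IsGaloisGroup.of_isFractionRing _ ℤ (𝓞 N) ℚ N
  have hpz : p ∈ P.under ℤ := by simpa [Ideal.under, Ideal.mem_comap] using hP
  have hp0 : P.under ℤ ≠ ⊥ := by
    intro h
    rw [h] at hpz
    exact hp.ne_zero (by simpa using hpz)
  have : Finite (ℤ ⧸ P.under ℤ) := Ring.HasFiniteQuotients.finiteQuotient hp0
  have : (P.under ℤ).IsMaximal := Ideal.IsPrime.isMaximal inferInstance hp0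
  rw [← Ideal.ramificationIdx_eq_one_iff,
      ← Ideal.ramificationIdxIn_eq_ramificationIdx (P.under ℤ) P Gal(N/ℚ),
      ← Ideal.card_inertia_eq_ramificationIdxIn (G := Gal(N/ℚ)) (P.under ℤ) P,
      Subgroup.card_eq_one, Subgroup.eq_bot_iff_forall]
  intro τ hτ
  have key : ∀ (σ : Gal(N/ℚ)) (x : K), τ (σ (algebraMap K N x)) = σ (algebraMap K N x) := by
    intro σ x
    have h1 : σ⁻¹ * τ * σ ∈ (σ⁻¹ • P).inertia Gal(N/ℚ) := by
      intro y
      have := hτ (σ • y)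
      have h2 : (σ⁻¹ * τ * σ) • y - y = σ⁻¹ • (τ • σ • y - σ • y) := by
        simp [mul_smul, smul_sub]
      rw [h2]
      exact Ideal.smul_mem_pointwise_smul _ _ _ this
    have h3 : (p : 𝓞 N) ∈ σ⁻¹ • P := by
      have := Ideal.smul_mem_pointwise_smul σ⁻¹ _ _ hP
      have h7 : σ⁻¹ • (p : 𝓞 N) = p := map_intCast (MulSemiringAction.toRingHom _ (𝓞 N) σ⁻¹) p
      rwa [h7] at this
    have h4 := inertia_le_fix K N p hp hpK (σ⁻¹ • P) h3 h1
    rw [mem_fixingSubgroup_iff] at h4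
    have h5 := h4 (algebraMap K N x) ⟨x, rfl⟩
    have h6 := congrArg σ h5
    simpa [mul_smul, AlgEquiv.smul_def] using h6
  have htop := IsNormalClosure.adjoin_rootSet (F := ℚ) (K := K) (L := N)
  have hfix : (⊤ : IntermediateField ℚ N) ≤ IntermediateField.fixedField (Subgroup.zpowers τ) := by
    rw [← htop, iSup_le_iff]
    intro x
    rw [IntermediateField.adjoin_le_iff]
    intro y hy
    have hy' : Polynomial.aeval y (minpoly ℚ (algebraMap K N x)) = 0 := by
      rw [minpoly.algebraMap_eq (algebraMap K N).injective]
      exact Polynomial.aeval_eq_zero_of_mem_rootSet hy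
    obtain ⟨σ, hσ⟩ := minpoly.exists_algEquiv_of_root' (Algebra.IsAlgebraic.isAlgebraic _) hy'
    have : τ ∈ MulAction.stabilizer Gal(N/ℚ) y := by
      rw [MulAction.mem_stabilizer_iff, ← hσ]; exact key σ x
    rintro ⟨g, hg⟩
    exact (Subgroup.zpowers_le.mpr this) hg
  ext y
  exact hfix (x := y) trivial ⟨τ, Subgroup.mem_zpowers τ⟩

theorem linDisj (K L : IntermediateField ℚ ℂ) [NumberField K] [NumberField L]
    (hcop : IsCoprime (discr K) (discr L)) : K.LinearDisjoint L := by
  let N := IntermediateField.normalClosure ℚ K ℂ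
  have : IsNormalClosure ℚ K N := Algebra.IsAlgebraic.isNormalClosure_normalClosure
    (fun x => IsAlgClosed.splits _)
  have : Normal ℚ N := IsNormalClosure.normal (K := K)
  have : IsGalois ℚ N := ⟨⟩
  have : NumberField N := ⟨⟩
  have hc : IsCoprime (discr N) (discr L) := by
    rw [← isRelPrime_iff_isCoprime]
    intro d hd1 hd2
    by_contra hd
    have hd0 : d ≠ 0 := fun h => discr_ne_zero N (zero_dvd_iff.mp (h ▸ hd1))
    obtain ⟨p, hp, hpd⟩ := WfDvdMonoid.exists_irreducible_factor hd hd0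
    have hpN : p ∣ discr N := hpd.trans hd1
    have hpK : p ∣ discr K := by
      by_contra h
      exact not_dvd_closure K N p hp.prime h hpN
    exact hp.not_isUnit (hcop.isUnit_of_dvd' hpK (hpd.trans hd2))
  have hinf : N ⊓ L = ⊥ := by
    have : FiniteDimensional ℚ ↥(N ⊓ L) :=
      FiniteDimensional.of_injective (IntermediateField.inclusion
        (inf_le_left : N ⊓ L ≤ N)).toLinearMap (RingHom.injective _)
    have : NumberField ↥(N ⊓ L) := ⟨⟩
    have : IsUnit (discr ↥(N ⊓ L)) := by
      let _ : Algebra ↥(N ⊓ L) N := (IntermediateField.inclusion inf_le_left).toRingHom.toAlgebra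
      let _ : Algebra ↥(N ⊓ L) L := (IntermediateField.inclusion inf_le_right).toRingHom.toAlgebra
      exact hc.isUnit_of_dvd' (discr_dvd_discr _ _) (discr_dvd_discr _ _)
    contrapose! this
    have : 1 < Module.finrank ℚ ↥(N ⊓ L) := by
      refine Nat.one_lt_iff_ne_zero_and_ne_one.mpr ⟨Module.finrank_pos.ne', ?_⟩
      rwa [ne_eq, ← IntermediateField.finrank_eq_one_iff] at this
    exact Int.isUnit_iff_abs_eq.not.mpr <| by linarith [abs_discr_gt_two this]
  have hG : @IsGalois ℚ _ N _ N.algebra' := by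
    convert ‹IsGalois ℚ N›
    exact Subsingleton.elim _ _
  have h := IntermediateField.LinearDisjoint.of_inf_eq_bot hinf
  exact h.of_le_left (IntermediateField.le_normalClosure K)

open Module IntermediateField in
theorem discr_prod (M : Type*) [Field M] [NumberField M] (K L : IntermediateField ℚ M)
    (h₁ : K.LinearDisjoint L) (h₂ : K ⊔ L = ⊤) (hcop : IsCoprime (discr K) (discr L)) :
    discr M = discr K ^ Module.finrank ℚ L * discr L ^ Module.finrank ℚ K := by
  classical
  have h₂' : K.toSubalgebra ⊔ L.toSubalgebra = ⊤ := by
    simpa [sup_toSubalgebra_of_isAlgebraic_right] using congr_arg IntermediateField.toSubalgebra h₂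
  let b := RingOfIntegers.basis K
  let c := RingOfIntegers.basis L
  let c' : Basis _ (𝓞 K) (𝓞 M) := c.ofIsCoprimeDifferentIdeal ℤ (𝓞 M) (𝓞 K) (𝓞 L) h₁ h₂'
    (isCoprime_differentIdeal_of_isCoprime_discr M hcop)
  have hc' (i) : c' i = algebraMap (𝓞 L) (𝓞 M) (c i) :=
    Basis.ofIsCoprimeDifferentIdeal_apply ..
  let d := b.smulTower c'
  have htr (x : K) (y : L) : Algebra.trace ℚ M (algebraMap K M x * algebraMap L M y) =
      Algebra.trace ℚ K x * Algebra.trace ℚ L y := by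
    rw [← Algebra.trace_trace (S := K), ← Algebra.smul_def, map_smul, h₁.trace_algebraMap h₂,
      smul_eq_mul, mul_comm, ← Algebra.smul_def, map_smul, smul_eq_mul]
    exact mul_comm _ _
  have hmat : Algebra.traceMatrix ℤ d =
      Matrix.kroneckerMap (· * ·) (Algebra.traceMatrix ℤ b) (Algebra.traceMatrix ℤ c) := by
    ext ⟨i, j⟩ ⟨i', j'⟩
    simp only [Algebra.traceMatrix_apply, Algebra.traceForm_apply, Matrix.kroneckerMap_apply]
    have e : (((d (i, j) * d (i', j') : 𝓞 M)) : M) =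
        algebraMap K M ((b i * b i' : 𝓞 K) : K) * algebraMap L M ((c j * c j' : 𝓞 L) : L) := by
      have e1 (i j) : ((d (i, j) : 𝓞 M) : M) = algebraMap K M (b i : K) * algebraMap L M (c j : L) := by
        simp only [d, Basis.smulTower_apply, hc', Algebra.smul_def, map_mul]
        rfl
      simp only [map_mul, e1]
      ring
    rw [← Rat.intCast_inj, Int.cast_mul, Algebra.coe_trace_int, Algebra.coe_trace_int,
      Algebra.coe_trace_int, e, htr]
  rw [← discr_eq_discr M d, ← discr_eq_discr K b, ← discr_eq_discr L c]
  simp only [Algebra.discr_def, hmat]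
  rw [Matrix.det_kronecker, ← Module.finrank_eq_card_chooseBasisIndex,
    ← Module.finrank_eq_card_chooseBasisIndex, RingOfIntegers.rank, RingOfIntegers.rank]

theorem discr_prod' (M : Type*) [Field M] [NumberField M] [a : Algebra ℚ M]
    (K L : IntermediateField ℚ M) [NumberField K] [NumberField L]
    (h₁ : K.LinearDisjoint L) (h₂ : K ⊔ L = ⊤) (hcop : IsCoprime (discr K) (discr L)) :
    discr M = discr K ^ Module.finrank ℚ L * discr L ^ Module.finrank ℚ K := by
  obtain rfl : a = DivisionRing.toRatAlgebra := Subsingleton.elim _ _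
  exact discr_prod M K L h₁ h₂ hcop

theorem restrict_sup {F E : Type*} [Field F] [Field E] [Algebra F E] (K L : IntermediateField F E) :
    (K.restrict le_sup_left : IntermediateField F ↥(K ⊔ L)) ⊔ L.restrict le_sup_right = ⊤ := by
  rw [← IntermediateField.lift_inj, IntermediateField.lift_top, IntermediateField.lift_sup,
    IntermediateField.lift_restrict le_sup_left, IntermediateField.lift_restrict le_sup_right]

theorem restrict_disj {F E : Type*} [Field F] [Field E] [Algebra F E] (K L : IntermediateField F E)
    [FiniteDimensional F K] [FiniteDimensional F L] (h : K.LinearDisjoint L) :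
    (K.restrict le_sup_left : IntermediateField F ↥(K ⊔ L)).LinearDisjoint
      ↥(L.restrict le_sup_right : IntermediateField F ↥(K ⊔ L)) := by
  let eK := IntermediateField.restrictAlgEquiv (le_sup_left : K ≤ K ⊔ L)
  let eL := IntermediateField.restrictAlgEquiv (le_sup_right : L ≤ K ⊔ L)
  have := eK.toLinearEquiv.finiteDimensional
  have := eL.toLinearEquiv.finiteDimensional
  apply IntermediateField.LinearDisjoint.of_finrank_sup
  rw [restrict_sup, IntermediateField.finrank_top', h.finrank_sup, eK.toLinearEquiv.finrank_eq,
    eL.toLinearEquiv.finrank_eq]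

theorem restrict_ringEquiv {F E : Type*} [Field F] [Field E] [Algebra F E]
    {K M : IntermediateField F E} (h : K ≤ M) :
    Nonempty (↥K ≃+* ↥(K.restrict h)) :=
  ⟨(IntermediateField.restrictAlgEquiv h).toRingEquiv⟩

theorem finrank_ringEquiv {A B : Type*} [Field A] [Field B] [Module ℚ A] [Module ℚ B]
    (e : A ≃+* B) : Module.finrank ℚ A = Module.finrank ℚ B :=
  (e.toAddEquiv.toLinearEquiv (fun c x => map_rat_smul e.toAddEquiv c x) : A ≃ₗ[ℚ] B).finrank_eq

theorem finDim_of_numberField (A : Type*) [Field A] [NumberField A] [m : Module ℚ A] :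
    FiniteDimensional ℚ A := by
  obtain rfl : m = Algebra.toModule := Subsingleton.elim _ _
  infer_instance

theorem discr_prod'' {E : Type*} [Field E] [Algebra ℚ E] (K L : IntermediateField ℚ E)
    [NumberField K] [NumberField L] [NumberField ↥(K ⊔ L)]
    (h : K.LinearDisjoint L) (hcop : IsCoprime (discr K) (discr L)) :
    discr ↥(K ⊔ L) = discr K ^ Module.finrank ℚ L * discr L ^ Module.finrank ℚ K := by
  obtain ⟨eK⟩ := restrict_ringEquiv (le_sup_left : K ≤ K ⊔ L)
  obtain ⟨eL⟩ := restrict_ringEquiv (le_sup_right : L ≤ K ⊔ L)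
  have : NumberField (K.restrict (le_sup_left : K ≤ K ⊔ L)) :=
    NumberField.of_ringEquiv _ _ eK
  have : NumberField (L.restrict (le_sup_right : L ≤ K ⊔ L)) :=
    NumberField.of_ringEquiv _ _ eL
  have dK := discr_eq_discr_of_ringEquiv _ eK
  have dL := discr_eq_discr_of_ringEquiv _ eL
  have fK : @FiniteDimensional ℚ K _ _ K.algebra'.toModule := finDim_of_numberField K
  have fL : @FiniteDimensional ℚ L _ _ L.algebra'.toModule := finDim_of_numberField L
  have hd := @restrict_disj ℚ E _ _ _ K L fK fL h
  have h' := @discr_prod' _ _ _ (K ⊔ L).algebra' _ _ _ _ hd (restrict_sup K L)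
    (by rwa [← dK, ← dL])
  rw [h', dK, dL]
  congr 2
  · exact (finrank_ringEquiv eL).symm
  · exact (finrank_ringEquiv eK).symm

/-- Let `K` and `L` be number fields with `K ∩ L = ℚ`, `[K:ℚ] = l`, `[L:ℚ] = k`,
and coprime discriminants. Then the discriminant of the compositum `KL` is
`d_K^k * d_L^l`. -/
theorem stmt16 (K L : IntermediateField ℚ ℂ)
    [NumberField K] [NumberField L] [NumberField ↥(K ⊔ L)]
    (hKL : K ⊓ L = ⊥)
    (l k : ℕ) (hl : Module.finrank ℚ K = l) (hk : Module.finrank ℚ L = k)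
    (hcop : IsCoprime (NumberField.discr K) (NumberField.discr L)) :
    NumberField.discr ↥(K ⊔ L) =
      NumberField.discr K ^ k * NumberField.discr L ^ l := by
  have hd := linDisj K L hcop
  have h := discr_prod'' K L hd hcop
  rw [h, ← hl, ← hk]
end
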